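/- Let ℓ, m be distinct lines of PG(2,q^3) meeting at a point P, and let b be an order-q-subline of m disjoint from ℓ. Then for each order-q-subline c of ℓ disjoint from m (i.e., not containing P), there is exactly one point X of PG(2,q^3), not on ℓ or m, such that the projection of b from X onto ℓ equals c. -/

import Mathlib

open Matrix

/-- Incidence of a point of PG(2,q^3) with the line of covector u. -/
def OnCov (F : Type) [Field F] (x : Projectivization F (Fin 3 → F))
    (u : Fin 3 → F) : Prop :=
  ∑ i, u i * x.rep i = 0

/-- An order-q-subline of PG(2,q^3): the image under a homography g ∈ GL(3,q^3) of the
canonical order-q-subline {(x,y,0) : x,y ∈ GF(q)} of the line z = 0. -/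
def SublinePlane (k F : Type) [Field k] [Field F] [Algebra k F]
    (g : GL (Fin 3) F) : Set (Projectivization F (Fin 3 → F)) :=
  {x | ∃ v : Fin 3 → k, v ≠ 0 ∧ v 2 = 0 ∧ ∃ c : F, c ≠ 0 ∧
    x.rep = c • (g : Matrix (Fin 3) (Fin 3) F).mulVec (fun i => algebraMap k F (v i))}

/-- The projection of a point set b from the point X onto the line of covector u:
the points of that line collinear with X and some point of b. -/
def ProjFrom (F : Type) [Field F] (X : Projectivization F (Fin 3 → F))
    (b : Set (Projectivization F (Fin 3 → F))) (u : Fin 3 → F) :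
    Set (Projectivization F (Fin 3 → F)) :=
  {y | OnCov F y u ∧ ∃ Q ∈ b, Matrix.det (Matrix.of ![X.rep, Q.rep, y.rep]) = 0}

/-- k-independence of a pair of field elements. -/
def Ind2 (k F : Type) [Field k] [Field F] [Algebra k F] (a b : F) : Prop :=
  ∀ x y : k, algebraMap k F x * a + algebraMap k F y * b = 0 → x = 0 ∧ y = 0

/-- F-independence of a pair of vectors. -/
def VInd2 (F V : Type) [Field F] [AddCommGroup V] [Module F V] (a b : V) : Prop :=
  ∀ x y : F, x • a + y • b = 0 → x = 0 ∧ y = 0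

lemma ind2_span {k F : Type} [Field k] [Field F] [Algebra k F] {a b : F}
    (h : Ind2 k F a b) : LinearIndependent k ![a, b] := by
  rw [LinearIndependent.pair_iff]
  intro s t hst
  apply h
  simpa [Algebra.smul_def] using hst

lemma exists_delta {k F : Type} [Field k] [Field F] [Algebra k F]
    (h3 : Module.finrank k F = 3) {b0 b1 g0 g1 : F}
    (hg : Ind2 k F g0 g1) :
    ∃ d : F, d ≠ 0 ∧ ∃ x0 y0 x1 y1 : k,
      d * b0 = algebraMap k F x0 * g0 + algebraMap k F y0 * g1 ∧
      d * b1 = algebraMap k F x1 * g0 + algebraMap k F y1 * g1 := by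
  have : FiniteDimensional k F := Module.finite_of_finrank_pos (by omega)
  let W : Submodule k F := Submodule.span k {g0, g1}
  have hW : Module.finrank k W = 2 := by
    have := finrank_span_eq_card (ind2_span hg)
    have hr : Set.range ![g0, g1] = {g0, g1} := by
      simp [Matrix.range_cons, Matrix.range_empty, Set.pair_comm]
    rw [hr] at this
    simpa [W] using this
  have hQ : Module.finrank k (F ⧸ W) = 1 := by
    have := W.finrank_quotient_add_finrank
    omega
  let φ : F →ₗ[k] (F ⧸ W) × (F ⧸ W) :=
    (W.mkQ ∘ₗ LinearMap.mulRight k b0).prod (W.mkQ ∘ₗ LinearMap.mulRight k b1)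
  have hk : LinearMap.ker φ ≠ ⊥ := by
    apply LinearMap.ker_ne_bot_of_finrank_lt
    rw [Module.finrank_prod]
    omega
  obtain ⟨d, hd, hd0⟩ := Submodule.exists_mem_ne_zero_of_ne_bot hk
  refine ⟨d, hd0, ?_⟩
  have h' : d * b0 ∈ W ∧ d * b1 ∈ W := by
    simpa [φ, LinearMap.mem_ker, Prod.ext_iff, Submodule.Quotient.mk_eq_zero] using hd
  obtain ⟨h0, h1⟩ := h'
  obtain ⟨x0, y0, e0⟩ := Submodule.mem_span_pair.1 h0
  obtain ⟨x1, y1, e1⟩ := Submodule.mem_span_pair.1 h1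
  refine ⟨x0, y0, x1, y1, ?_, ?_⟩
  · rw [← e0, Algebra.smul_def, Algebra.smul_def]
  · rw [← e1, Algebra.smul_def, Algebra.smul_def]

lemma sigma_mem {k F : Type} [Field k] [Field F] [Algebra k F]
    (h3 : Module.finrank k F = 3) (s : F) (t n : k)
    (h : s ^ 2 + algebraMap k F t * s + algebraMap k F n = 0) :
    ∃ r : k, s = algebraMap k F r := by
  have : FiniteDimensional k F := Module.finite_of_finrank_pos (by omega)
  have hs : IsIntegral k s := Algebra.IsIntegral.isIntegral s
  let P : Polynomial k := Polynomial.X ^ 2 + Polynomial.C t * Polynomial.X + Polynomial.C n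
  have hPd : P.natDegree = 2 := by
    simp only [P]; compute_degree!
  have hP0 : P ≠ 0 := by
    intro h0; rw [h0] at hPd; simp at hPd
  have hP : Polynomial.aeval s P = 0 := by
    simpa [P] using h
  have hle : (minpoly k s).natDegree ≤ 2 := by
    rw [← hPd]
    exact Polynomial.natDegree_le_of_dvd (minpoly.dvd k s hP) hP0
  have hdv : (minpoly k s).natDegree ∣ 3 := by
    rw [← h3]; exact minpoly.degree_dvd hs
  have h1 : (minpoly k s).natDegree = 1 := by
    rcases (Nat.dvd_prime Nat.prime_three).1 hdv with h | h
    · exact h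
    · omega
  obtain ⟨r, hr⟩ := minpoly.natDegree_eq_one_iff.1 h1
  exact ⟨r, hr.symm⟩

/-- Two multipliers between the same two-dimensional subspaces differ by an element of k. -/
lemma delta_unique {k F : Type} [Field k] [Field F] [Algebra k F]
    (h3 : Module.finrank k F = 3) {b0 b1 g0 g1 d e : F}
    (hb : Ind2 k F b0 b1) (hd : d ≠ 0)
    {x0 y0 x1 y1 z0 v0 z1 v1 : k}
    (d0 : d * b0 = algebraMap k F x0 * g0 + algebraMap k F y0 * g1)
    (d1 : d * b1 = algebraMap k F x1 * g0 + algebraMap k F y1 * g1)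
    (e0 : e * b0 = algebraMap k F z0 * g0 + algebraMap k F v0 * g1)
    (e1 : e * b1 = algebraMap k F z1 * g0 + algebraMap k F v1 * g1) :
    ∃ s : k, e = algebraMap k F s * d := by
  have hD : x0 * y1 - x1 * y0 ≠ 0 := by
    intro hD
    have hD' : algebraMap k F x0 * algebraMap k F y1 - algebraMap k F x1 * algebraMap k F y0 = 0 := by
      rw [← map_mul, ← map_mul, ← map_sub, hD, map_zero]
    have A := hb y1 (-y0) (by
      apply mul_left_cancel₀ hd
      simp only [map_neg]
      linear_combination algebraMap k F y1 * d0 - algebraMap k F y0 * d1 + g0 * hD')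
    have B := hb x1 (-x0) (by
      apply mul_left_cancel₀ hd
      simp only [map_neg]
      linear_combination algebraMap k F x1 * d0 - algebraMap k F x0 * d1 - g1 * hD')
    have hy0 : y0 = 0 := by simpa using A.2
    have hx0 : x0 = 0 := by simpa using B.2
    have hb0 : b0 = 0 := by
      rw [hy0, hx0] at d0
      simpa [hd] using d0
    have := hb 1 0 (by simp [hb0])
    exact one_ne_zero this.1
  -- g in terms of b
  have hDF : algebraMap k F (x0 * y1 - x1 * y0) ≠ 0 :=
    (map_ne_zero _).2 hD
  have hb0 : b0 ≠ 0 := by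
    intro h
    exact one_ne_zero (hb 1 0 (by simp [h])).1
  -- matrix N = Z X^{-1} in the b-basis: σ b_j = Σ N b
  obtain ⟨s, hs⟩ : ∃ s : F, e = s * d := ⟨e / d, by field_simp⟩
  set D := x0 * y1 - x1 * y0 with hDdef
  have key0 : s * b0 = algebraMap k F ((z0 * y1 - v0 * x1) / D) * b0
      + algebraMap k F ((v0 * x0 - z0 * y0) / D) * b1 := by
    rw [map_div₀, map_div₀]
    field_simp
    apply mul_left_cancel₀ hd
    rw [hDdef]
    simp only [map_sub, map_mul]
    subst hs
    linear_combination (algebraMap k F x0 * algebraMap k F y1 - algebraMap k F x1 * algebraMap k F y0) * e0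
      - (algebraMap k F z0 * algebraMap k F y1 - algebraMap k F v0 * algebraMap k F x1) * d0
      - (algebraMap k F v0 * algebraMap k F x0 - algebraMap k F z0 * algebraMap k F y0) * d1
  have key1 : s * b1 = algebraMap k F ((z1 * y1 - v1 * x1) / D) * b0
      + algebraMap k F ((v1 * x0 - z1 * y0) / D) * b1 := by
    rw [map_div₀, map_div₀]
    field_simp
    apply mul_left_cancel₀ hd
    rw [hDdef]
    simp only [map_sub, map_mul]
    subst hs
    linear_combination (algebraMap k F x0 * algebraMap k F y1 - algebraMap k F x1 * algebraMap k F y0) * e1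
      - (algebraMap k F z1 * algebraMap k F y1 - algebraMap k F v1 * algebraMap k F x1) * d0
      - (algebraMap k F v1 * algebraMap k F x0 - algebraMap k F z1 * algebraMap k F y0) * d1
  generalize (z0 * y1 - v0 * x1) / D = n00 at key0
  generalize (v0 * x0 - z0 * y0) / D = n01 at key0
  generalize (z1 * y1 - v1 * x1) / D = n10 at key1
  generalize (v1 * x0 - z1 * y0) / D = n11 at key1
  obtain ⟨r, hr⟩ := sigma_mem h3 s (-(n00 + n11)) (n00 * n11 - n01 * n10) (by
    apply mul_left_cancel₀ hb0
    simp only [map_neg, map_add, map_sub, map_mul]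
    linear_combination (s - algebraMap k F n11) * key0 + algebraMap k F n01 * key1)
  exact ⟨r, by rw [hs, hr]⟩

section core
variable {k F V : Type} [Field k] [Field F] [Algebra k F] [AddCommGroup V] [Module F V]

/-- The (homogeneous) projection from X onto the kernel of f. -/
def TT (f : V →ₗ[F] F) (X Q : V) : V := f X • Q - f Q • X

/-- The k-combination of two vectors. -/
def kc (k : Type) {F V : Type} [Field k] [Field F] [Algebra k F] [AddCommGroup V] [Module F V]
    (a b : V) (x y : k) : V := algebraMap k F x • a + algebraMap k F y • b

lemma common_scale (f h : V →ₗ[F] F) {b0 b1 c0 c1 X : V}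
    (hb : VInd2 F V b0 b1) (hh0 : h b0 = 0) (hh1 : h b1 = 0)
    (hfX : f X ≠ 0) (hhX : h X ≠ 0)
    (hT : ∀ x y : k, (x ≠ 0 ∨ y ≠ 0) → ∃ a : F, a ≠ 0 ∧ ∃ z v : k,
      TT f X (kc (F := F) k b0 b1 x y) = a • kc (F := F) k c0 c1 z v) :
    ∃ γ : F, γ ≠ 0 ∧ ∃ x0 y0 x1 y1 : k, TT f X b0 = γ • kc (F := F) k c0 c1 x0 y0 ∧
      TT f X b1 = γ • kc (F := F) k c0 c1 x1 y1 := by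
  obtain ⟨a0, ha0, x0, y0, e0⟩ := hT 1 0 (by simp)
  obtain ⟨a1, ha1, x1, y1, e1⟩ := hT 0 1 (by simp)
  obtain ⟨a2, ha2, x2, y2, e2⟩ := hT 1 1 (by simp)
  have s0 : kc (F := F) k b0 b1 1 0 = b0 := by simp [kc]
  have s1 : kc (F := F) k b0 b1 0 1 = b1 := by simp [kc]
  have s2 : kc (F := F) k b0 b1 1 1 = b0 + b1 := by simp [kc]
  rw [s0] at e0
  rw [s1] at e1
  rw [s2] at e2
  -- F-independence of the images
  have hTi : VInd2 F V (TT f X b0) (TT f X b1) := by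
    intro r s hrs
    have h1 : (r * f b0 + s * f b1) * h X = 0 := by
      have := congrArg h hrs
      simp [TT, hh0, hh1] at this
      linear_combination -this
    have h2 : r * f b0 + s * f b1 = 0 := by
      rcases mul_eq_zero.1 h1 with h | h
      · exact h
      · exact absurd h hhX
    have h3 : f X • (r • b0 + s • b1) = 0 := by
      have : f X • (r • b0 + s • b1) = (r • TT f X b0 + s • TT f X b1) + (r * f b0 + s * f b1) • X := by
        simp only [TT]; module
      rw [this, hrs, h2]; simp
    exact hb r s ((smul_eq_zero.1 h3).resolve_left hfX)
  have hvi : VInd2 F V (kc (F := F) k c0 c1 x0 y0) (kc (F := F) k c0 c1 x1 y1) := by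
    intro r s hrs
    have := hTi (r / a0) (s / a1) (by
      rw [e0, e1, smul_smul, smul_smul, div_mul_cancel₀ _ ha0, div_mul_cancel₀ _ ha1, hrs])
    simpa [ha0, ha1] using this
  have hD : x0 * y1 - x1 * y0 ≠ 0 := by
    intro hD
    have hD' : algebraMap k F x0 * algebraMap k F y1 - algebraMap k F x1 * algebraMap k F y0 = 0 := by
      rw [← map_mul, ← map_mul, ← map_sub, hD, map_zero]
    have A := hvi (algebraMap k F y1) (-algebraMap k F y0) (by
      have : algebraMap k F y1 • kc (F := F) k c0 c1 x0 y0 + (-algebraMap k F y0) • kc (F := F) k c0 c1 x1 y1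
        = (algebraMap k F x0 * algebraMap k F y1 - algebraMap k F x1 * algebraMap k F y0) • c0 := by
        simp only [kc]; module
      rw [this, hD', zero_smul])
    have B := hvi (algebraMap k F x1) (-algebraMap k F x0) (by
      have : algebraMap k F x1 • kc (F := F) k c0 c1 x0 y0 + (-algebraMap k F x0) • kc (F := F) k c0 c1 x1 y1
        = (-(algebraMap k F x0 * algebraMap k F y1 - algebraMap k F x1 * algebraMap k F y0)) • c1 := by
        simp only [kc]; module
      rw [this, hD']; simp)
    have hx : x0 = 0 := by simpa using B.2
    have hy : y0 = 0 := by simpa using A.2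
    have := hvi 1 0 (by simp [kc, hx, hy])
    exact one_ne_zero this.1
  have hDF : algebraMap k F (x0 * y1 - x1 * y0) ≠ 0 := (map_ne_zero _).2 hD
  -- express v2 through v0, v1
  have hsum : a0 • kc (F := F) k c0 c1 x0 y0 + a1 • kc (F := F) k c0 c1 x1 y1
      = a2 • kc (F := F) k c0 c1 x2 y2 := by
    rw [← e0, ← e1, ← e2]; simp only [TT, map_add]; module
  have hz := hvi (algebraMap k F (x0 * y1 - x1 * y0) * a0 - a2 * algebraMap k F (x2 * y1 - x1 * y2))
    (algebraMap k F (x0 * y1 - x1 * y0) * a1 - a2 * algebraMap k F (x0 * y2 - x2 * y0)) (by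
      have : ∀ D : F, D • (a0 • kc (F := F) k c0 c1 x0 y0 + a1 • kc (F := F) k c0 c1 x1 y1
        - a2 • kc (F := F) k c0 c1 x2 y2) = 0 := by
        intro D; rw [hsum]; simp
      rw [← this (algebraMap k F (x0 * y1 - x1 * y0))]
      simp only [kc, map_sub, map_mul]
      module)
  have f0 : a0 = a2 * algebraMap k F ((x2 * y1 - x1 * y2) / (x0 * y1 - x1 * y0)) := by
    rw [map_div₀, ← mul_div_assoc, eq_div_iff hDF]; linear_combination hz.1
  have f1 : a1 = a2 * algebraMap k F ((x0 * y2 - x2 * y0) / (x0 * y1 - x1 * y0)) := by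
    rw [map_div₀, ← mul_div_assoc, eq_div_iff hDF]; linear_combination hz.2
  generalize (x2 * y1 - x1 * y2) / (x0 * y1 - x1 * y0) = n0 at f0
  generalize (x0 * y2 - x2 * y0) / (x0 * y1 - x1 * y0) = n1 at f1
  refine ⟨a2, ha2, n0 * x0, n0 * y0, n1 * x1, n1 * y1, ?_, ?_⟩
  · rw [e0, f0]; simp only [kc, map_mul]; module
  · rw [e1, f1]; simp only [kc, map_mul]; module

lemma core_unique (h3 : Module.finrank k F = 3) (f h : V →ₗ[F] F) {b0 b1 c0 c1 X Y : V}
    (hb : VInd2 F V b0 b1) (hh0 : h b0 = 0) (hh1 : h b1 = 0)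
    (hβ : Ind2 k F (f b0) (f b1)) (hγ : Ind2 k F (h c0) (h c1))
    (hfX : f X ≠ 0) (hhX : h X ≠ 0)
    (hT : ∀ x y : k, (x ≠ 0 ∨ y ≠ 0) → ∃ a : F, a ≠ 0 ∧ ∃ z v : k,
      TT f X (kc (F := F) k b0 b1 x y) = a • kc (F := F) k c0 c1 z v)
    (hfY : f Y ≠ 0) (hhY : h Y ≠ 0)
    (hTY : ∀ x y : k, (x ≠ 0 ∨ y ≠ 0) → ∃ a : F, a ≠ 0 ∧ ∃ z v : k,
      TT f Y (kc (F := F) k b0 b1 x y) = a • kc (F := F) k c0 c1 z v) :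
    ∃ ρ : F, Y = ρ • X := by
  obtain ⟨g, hg, x0, y0, x1, y1, e0, e1⟩ := common_scale f h hb hh0 hh1 hfX hhX hT
  obtain ⟨g', hg', z0, v0, z1, v1, e0', e1'⟩ := common_scale f h hb hh0 hh1 hfY hhY hTY
  have H : ∀ (Z : V) (g : F) (b : V) (x y : k), h b = 0 → g ≠ 0 →
      TT f Z b = g • kc (F := F) k c0 c1 x y →
      (-(h Z) / g) * f b = algebraMap k F x * h c0 + algebraMap k F y * h c1 := by
    intro Z g b x y hb hg e
    have := congrArg h e
    simp [TT, kc, hb] at this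
    field_simp
    linear_combination this
  have d0 := H _ _ _ _ _ hh0 hg e0
  have d1 := H _ _ _ _ _ hh1 hg e1
  have d0' := H _ _ _ _ _ hh0 hg' e0'
  have d1' := H _ _ _ _ _ hh1 hg' e1'
  obtain ⟨s, hs⟩ := delta_unique h3 hβ (div_ne_zero (neg_ne_zero.2 hhX) hg) d0 d1 d0' d1'
  have K : ∀ (b : F) (x y z v : k),
      (-(h X) / g) * b = algebraMap k F x * h c0 + algebraMap k F y * h c1 →
      (-(h Y) / g') * b = algebraMap k F z * h c0 + algebraMap k F v * h c1 →
      z = s * x ∧ v = s * y := by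
    intro b x y z v e e'
    rw [hs] at e'
    have := hγ (z - s * x) (v - s * y) (by
      simp only [map_sub, map_mul]
      linear_combination algebraMap k F s * e - e')
    exact ⟨sub_eq_zero.1 this.1, sub_eq_zero.1 this.2⟩
  obtain ⟨rfl, rfl⟩ := K _ _ _ _ _ d0 d0'
  obtain ⟨rfl, rfl⟩ := K _ _ _ _ _ d1 d1'
  have hk : ∀ x y : k, g' • kc (F := F) k c0 c1 (s * x) (s * y)
      = (g' * algebraMap k F s / g) • g • kc (F := F) k c0 c1 x y := by
    intro x y
    rw [smul_smul, div_mul_cancel₀ _ hg]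
    simp only [kc, map_mul]; module
  rw [hk, ← e0] at e0'
  rw [hk, ← e1] at e1'
  generalize g' * algebraMap k F s / g = ρ at e0' e1'
  have hb0 : f b0 ≠ 0 := by
    intro h
    exact one_ne_zero (hβ 1 0 (by simp [h])).1
  have hc := hb ((f Y - ρ * f X) * f b1) (-(f Y - ρ * f X) * f b0) (by
    have e : f b1 • (TT f Y b0 - ρ • TT f X b0) - f b0 • (TT f Y b1 - ρ • TT f X b1) = 0 := by
      rw [e0', e1']; simp
    rw [← e]; simp only [TT]; module)
  have hfe : f Y - ρ * f X = 0 :=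
    neg_eq_zero.1 ((mul_eq_zero.1 hc.2).resolve_right hb0)
  refine ⟨ρ, ?_⟩
  have e : f b0 • (Y - ρ • X) = 0 := by
    have : f b0 • (Y - ρ • X) = (f Y - ρ * f X) • b0 - (TT f Y b0 - ρ • TT f X b0) := by
      simp only [TT]; module
    rw [this, hfe, e0']; simp
  exact sub_eq_zero.1 ((smul_eq_zero.1 e).resolve_left hb0)

/-- existence: X with f X = 1 such that the projection carries b-combinations bijectively. -/
lemma core_exists (h3 : Module.finrank k F = 3) (f h : V →ₗ[F] F) {b0 b1 c0 c1 : V}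
    (hker : ∀ p r : V, f p = 0 → h p = 0 → f r = 0 → h r = 0 → r ≠ 0 → ∃ a : F, p = a • r)
    (hb : VInd2 F V b0 b1) (hh0 : h b0 = 0) (hh1 : h b1 = 0)
    (hc : VInd2 F V c0 c1) (hf0 : f c0 = 0) (hf1 : f c1 = 0)
    (hβ : Ind2 k F (f b0) (f b1)) (hγ : Ind2 k F (h c0) (h c1)) :
    ∃ X : V, f X ≠ 0 ∧ h X ≠ 0 ∧ ∃ g : F, g ≠ 0 ∧
      (∀ x y : k, ∃ z v : k, TT f X (kc (F := F) k b0 b1 x y) = g • kc (F := F) k c0 c1 z v) ∧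
      (∀ z v : k, ∃ x y : k, TT f X (kc (F := F) k b0 b1 x y) = g • kc (F := F) k c0 c1 z v) := by
  obtain ⟨d, hd, x0, y0, x1, y1, d0, d1⟩ := exists_delta h3 (b0 := f b0) (b1 := f b1) hγ
  have hb0 : f b0 ≠ 0 := by
    intro h
    exact one_ne_zero (hβ 1 0 (by simp [h])).1
  have hD : x0 * y1 - x1 * y0 ≠ 0 := by
    intro hD
    have hD' : algebraMap k F x0 * algebraMap k F y1 - algebraMap k F x1 * algebraMap k F y0 = 0 := by
      rw [← map_mul, ← map_mul, ← map_sub, hD, map_zero]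
    have A := hβ y1 (-y0) (by
      apply mul_left_cancel₀ hd
      simp only [map_neg]
      linear_combination algebraMap k F y1 * d0 - algebraMap k F y0 * d1 + h c0 * hD')
    have B := hβ x1 (-x0) (by
      apply mul_left_cancel₀ hd
      simp only [map_neg]
      linear_combination algebraMap k F x1 * d0 - algebraMap k F x0 * d1 - h c1 * hD')
    have hy0 : y0 = 0 := by simpa using A.2
    have hx0 : x0 = 0 := by simpa using B.2
    rw [hy0, hx0] at d0
    exact hb0 (by simpa [hd] using d0)
  have hD' : algebraMap k F x0 * algebraMap k F y1 - algebraMap k F x1 * algebraMap k F y0 ≠ 0 := by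
    rw [← map_mul, ← map_mul, ← map_sub]; exact (map_ne_zero _).2 hD
  set t0 : V := kc (F := F) k c0 c1 x0 y0 with ht0
  set t1 : V := kc (F := F) k c0 c1 x1 y1 with ht1
  have hr0 : f b1 • t0 - f b0 • t1 ≠ 0 := by
    intro e
    have := hc (f b1 * algebraMap k F x0 - f b0 * algebraMap k F x1)
      (f b1 * algebraMap k F y0 - f b0 * algebraMap k F y1) (by
        rw [← e, ht0, ht1]; simp only [kc]; module)
    apply hb0
    have e : f b0 * (algebraMap k F x0 * algebraMap k F y1 - algebraMap k F x1 * algebraMap k F y0) = 0 := by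
      linear_combination algebraMap k F y0 * this.1 - algebraMap k F x0 * this.2
    exact (mul_eq_zero.1 e).resolve_right hD'
  have hft0 : f t0 = 0 := by simp [ht0, kc, hf0, hf1]
  have hft1 : f t1 = 0 := by simp [ht1, kc, hf0, hf1]
  have hht0 : h t0 = d * f b0 := by rw [d0]; simp [ht0, kc]
  have hht1 : h t1 = d * f b1 := by rw [d1]; simp [ht1, kc]
  obtain ⟨g, hg⟩ := hker (f b1 • b0 - f b0 • b1) (f b1 • t0 - f b0 • t1)
    (by simp; ring) (by simp [hh0, hh1]) (by simp [hft0, hft1])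
    (by simp [hht0, hht1]; ring) hr0
  have hg0 : g ≠ 0 := by
    rintro rfl
    have := hb (f b1) (-f b0) (by rw [zero_smul] at hg; rw [← hg]; module)
    exact hb0 (by simpa using this.2)
  let X : V := (f b0)⁻¹ • (b0 - g • t0)
  have hX : f b0 • X = b0 - g • t0 := by
    simp only [X]; rw [smul_smul, mul_inv_cancel₀ hb0, one_smul]
  have hfX : f X = 1 := by simp [X, hft0, hb0]
  have hhX : h X ≠ 0 := by
    simp [X, hht0, hh0, hb0, hg0, hd]
  have T0 : TT f X b0 = g • t0 := by
    simp only [TT]; rw [hfX, hX]; module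
  have T1 : TT f X b1 = g • t1 := by
    have : f b0 • (TT f X b1 - g • t1) = 0 := by
      have e : f b0 • (TT f X b1 - g • t1) = f b0 • b1 - f b1 • (f b0 • X) - (f b0 * g) • t1 := by
        simp only [TT]; rw [hfX]; module
      rw [e, hX]
      have e2 : f b0 • b1 - f b1 • (b0 - g • t0) - (f b0 * g) • t1
        = g • (f b1 • t0 - f b0 • t1) - (f b1 • b0 - f b0 • b1) := by module
      rw [e2, hg]; simp
    exact sub_eq_zero.1 ((smul_eq_zero.1 this).resolve_left hb0)
  have T2 : ∀ x y : k, TT f X (kc (F := F) k b0 b1 x y)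
      = g • kc (F := F) k c0 c1 (x * x0 + y * x1) (x * y0 + y * y1) := by
    intro x y
    have : TT f X (kc (F := F) k b0 b1 x y)
      = algebraMap k F x • TT f X b0 + algebraMap k F y • TT f X b1 := by
      simp only [TT, kc, map_add, map_smul, smul_eq_mul]; module
    rw [this, T0, T1, ht0, ht1]
    simp only [kc, map_add, map_mul]; module
  refine ⟨X, by rw [hfX]; exact one_ne_zero, hhX, g, hg0, fun x y => ⟨_, _, T2 x y⟩, ?_⟩
  intro z v
  refine ⟨(z * y1 - v * x1) / (x0 * y1 - x1 * y0), (v * x0 - z * y0) / (x0 * y1 - x1 * y0), ?_⟩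
  rw [T2]
  congr 2
  · rw [div_mul_eq_mul_div, div_mul_eq_mul_div, ← add_div, div_eq_iff hD]; ring
  · rw [div_mul_eq_mul_div, div_mul_eq_mul_div, ← add_div, div_eq_iff hD]; ring

end core

/-- The linear functional of a covector. -/
def covL {F : Type} [Field F] (u : Fin 3 → F) : (Fin 3 → F) →ₗ[F] F where
  toFun v := ∑ i, u i * v i
  map_add' a b := by simp [mul_add, Finset.sum_add_distrib]
  map_smul' a b := by
    simp only [Pi.smul_apply, smul_eq_mul, RingHom.id_apply, Finset.mul_sum]
    exact Finset.sum_congr rfl (fun i _ => by ring)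

/-- Columns of a matrix in GL(3). -/
def colv {F : Type} [Field F] (g : GL (Fin 3) F) (j : Fin 3) : Fin 3 → F :=
  fun i => (g : Matrix (Fin 3) (Fin 3) F) i j

lemma colv_ind {F : Type} [Field F] (g : GL (Fin 3) F) :
    VInd2 F (Fin 3 → F) (colv g 0) (colv g 1) := by
  intro x y hxy
  have h1 : (g : Matrix (Fin 3) (Fin 3) F).mulVec ![x, y, 0] = 0 := by
    rw [← hxy]
    ext i
    simp [Matrix.mulVec, dotProduct, Fin.sum_univ_three, colv]
    ring
  have h2 : ![x, y, 0] = (0 : Fin 3 → F) := by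
    have hi := Matrix.mulVec_injective_of_isUnit (A := (g : Matrix (Fin 3) (Fin 3) F)) g.isUnit
    apply hi
    simpa using h1
  exact ⟨by simpa using congrFun h2 0, by simpa using congrFun h2 1⟩

lemma kc_ne {k F V : Type} [Field k] [Field F] [Algebra k F] [AddCommGroup V] [Module F V]
    {a b : V} (h : VInd2 F V a b) {x y : k} (hxy : x ≠ 0 ∨ y ≠ 0) : kc (F := F) k a b x y ≠ 0 := by
  intro e
  have := h _ _ e
  simp only [map_eq_zero] at this
  tauto

lemma mem_subline {k F : Type} [Field k] [Field F] [Algebra k F] (g : GL (Fin 3) F)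
    (X : Projectivization F (Fin 3 → F)) :
    X ∈ SublinePlane k F g ↔ ∃ x y : k, (x ≠ 0 ∨ y ≠ 0) ∧ ∃ c : F, c ≠ 0 ∧
      X.rep = c • kc (F := F) k (colv g 0) (colv g 1) x y := by
  constructor
  · rintro ⟨v, hv, hv2, c, hc, e⟩
    refine ⟨v 0, v 1, ?_, c, hc, ?_⟩
    · by_contra hcon
      push Not at hcon
      apply hv
      ext i
      fin_cases i
      · exact hcon.1
      · exact hcon.2
      · exact hv2
    · rw [e]
      congr 1
      ext i
      simp [Matrix.mulVec, dotProduct, Fin.sum_univ_three, colv, kc, hv2, Algebra.smul_def]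
      ring
  · rintro ⟨x, y, hxy, c, hc, e⟩
    refine ⟨![x, y, 0], ?_, by simp, c, hc, ?_⟩
    · intro h
      have h0 : x = 0 := by simpa using congrFun h 0
      have h1 : y = 0 := by simpa using congrFun h 1
      tauto
    · rw [e]
      congr 1
      ext i
      simp [Matrix.mulVec, dotProduct, Fin.sum_univ_three, colv, kc, Algebra.smul_def]
      ring

lemma mk_rep {F : Type} [Field F] (v : Fin 3 → F) (hv : v ≠ 0) :
    ∃ a : F, a ≠ 0 ∧ (Projectivization.mk F v hv).rep = a • v := by
  obtain ⟨a, ha⟩ := Projectivization.exists_smul_eq_mk_rep F v hv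
  exact ⟨a, a.ne_zero, ha.symm⟩

lemma det_dep {F : Type} [Field F] {X Q y : Fin 3 → F}
    (h : Matrix.det (Matrix.of ![X, Q, y]) = 0) :
    ∃ r s t : F, (r ≠ 0 ∨ s ≠ 0 ∨ t ≠ 0) ∧ r • X + s • Q + t • y = 0 := by
  obtain ⟨v, hv, e⟩ := Matrix.exists_vecMul_eq_zero_iff.2 h
  refine ⟨v 0, v 1, v 2, ?_, ?_⟩
  · by_contra hcon
    push Not at hcon
    apply hv
    ext i
    fin_cases i
    · exact hcon.1
    · exact hcon.2.1
    · exact hcon.2.2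
  · rw [← e]
    ext i
    simp [Matrix.vecMul, dotProduct, Fin.sum_univ_three]

lemma dep_det {F : Type} [Field F] {X Q y : Fin 3 → F} {r s : F}
    (h : y = r • X + s • Q) : Matrix.det (Matrix.of ![X, Q, y]) = 0 := by
  subst h
  simp [Matrix.det_fin_three]
  ring

lemma det_proj {F : Type} [Field F] (f h : (Fin 3 → F) →ₗ[F] F) {X Q y : Fin 3 → F}
    (hfX : f X ≠ 0) (hhX : h X ≠ 0) (hfQ : f Q ≠ 0) (hhQ : h Q = 0) (hy : f y = 0)
    (hd : Matrix.det (Matrix.of ![X, Q, y]) = 0) : ∃ a : F, y = a • TT f X Q := by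
  obtain ⟨r, s, t, hrst, e⟩ := det_dep hd
  have ef := congrArg f e
  have eh := congrArg h e
  simp [hy] at ef
  simp [hhQ] at eh
  have ht : t ≠ 0 := by
    rintro rfl
    have hr : r = 0 := by simpa [hhX] using eh
    have hs : s = 0 := by simpa [hr, hfQ] using ef
    simp [hr, hs] at hrst
  refine ⟨-s / (t * f X), ?_⟩
  have key : (t * f X) • (y - (-s / (t * f X)) • TT f X Q) = 0 := by
    have e1 : (t * f X) • (y - (-s / (t * f X)) • TT f X Q)
        = (t * f X) • y - ((t * f X) * (-s / (t * f X))) • TT f X Q := by module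
    rw [e1, mul_div_cancel₀ _ (mul_ne_zero ht hfX)]
    have e2 : (t * f X) • y - (-s) • TT f X Q
      = f X • (r • X + s • Q + t • y) - (r * f X + s * f Q) • X := by
      simp only [TT]; module
    rw [e2, e, ef]; simp
  exact sub_eq_zero.1 ((smul_eq_zero.1 key).resolve_left (mul_ne_zero ht hfX))

lemma ker_lem {F : Type} [Field F] (u w b0 : Fin 3 → F) (hw : w ≠ 0)
    (hf : covL u b0 ≠ 0) (hh : covL w b0 = 0) (p r : Fin 3 → F)
    (hp : covL u p = 0) (hp' : covL w p = 0) (hr : covL u r = 0) (hr' : covL w r = 0)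
    (hr0 : r ≠ 0) : ∃ a : F, p = a • r := by
  have hd : Matrix.det (Matrix.of ![p, r, b0]) = 0 := by
    apply Matrix.exists_mulVec_eq_zero_iff.1
    refine ⟨w, hw, ?_⟩
    ext i
    fin_cases i
    · simpa [covL, Matrix.mulVec, dotProduct, mul_comm] using hp'
    · simpa [covL, Matrix.mulVec, dotProduct, mul_comm] using hr'
    · simpa [covL, Matrix.mulVec, dotProduct, mul_comm] using hh
  obtain ⟨x, y, z, hxyz, e⟩ := det_dep hd
  have ef := congrArg (covL u) e
  have hz : z = 0 := by
    simpa [hp, hr, hf] using ef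
  subst hz
  have hx : x ≠ 0 := by
    rintro rfl
    have hy : y = 0 := by simpa [hr0] using e
    simp [hy] at hxyz
  refine ⟨-y / x, ?_⟩
  have e' : x • p = -(y • r) := by
    rw [zero_smul, add_zero] at e
    exact eq_neg_of_add_eq_zero_left e
  have : p = x⁻¹ • (x • p) := by rw [smul_smul, inv_mul_cancel₀ hx, one_smul]
  rw [this, e', div_eq_inv_mul]
  module

lemma TT_smul_left {F V : Type} [Field F] [AddCommGroup V] [Module F V] (f : V →ₗ[F] F)
    (a : F) (X Q : V) : TT f (a • X) Q = a • TT f X Q := by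
  simp only [TT, map_smul, smul_eq_mul]; module

lemma TT_smul_right {F V : Type} [Field F] [AddCommGroup V] [Module F V] (f : V →ₗ[F] F)
    (a : F) (X Q : V) : TT f X (a • Q) = a • TT f X Q := by
  simp only [TT, map_smul, smul_eq_mul]; module

lemma TT_self {F V : Type} [Field F] [AddCommGroup V] [Module F V] (f : V →ₗ[F] F)
    (X Q : V) : f (TT f X Q) = 0 := by
  simp [TT]; ring

lemma TT_ne {F V : Type} [Field F] [AddCommGroup V] [Module F V] (f h : V →ₗ[F] F)
    {X Q : V} (hhX : h X ≠ 0) (hfQ : f Q ≠ 0) (hhQ : h Q = 0) : TT f X Q ≠ 0 := by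
  intro e
  have := congrArg h e
  simp [TT, hhX, hfQ, hhQ] at this

/-- Values of functionals on a subline. -/
lemma subline_vals {k F : Type} [Field k] [Field F] [Algebra k F] (g : GL (Fin 3) F)
    (u w : Fin 3 → F)
    (h1 : ∀ x ∈ SublinePlane k F g, OnCov F x w) (h2 : ∀ x ∈ SublinePlane k F g, ¬ OnCov F x u)
    (x y : k) (hxy : x ≠ 0 ∨ y ≠ 0) :
    covL w (kc (F := F) k (colv g 0) (colv g 1) x y) = 0 ∧
    covL u (kc (F := F) k (colv g 0) (colv g 1) x y) ≠ 0 := by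
  have hne := kc_ne (k := k) (colv_ind g) hxy
  obtain ⟨a, ha, e⟩ := mk_rep _ hne
  have hm := (mem_subline (k := k) g (Projectivization.mk F _ hne)).2 ⟨x, y, hxy, a, ha, e⟩
  have A : covL w (Projectivization.mk F _ hne).rep = 0 := h1 _ hm
  have B : covL u (Projectivization.mk F _ hne).rep ≠ 0 := h2 _ hm
  rw [e, map_smul, smul_eq_mul] at A B
  exact ⟨(mul_eq_zero.1 A).resolve_left ha, fun h => B (by rw [h, mul_zero])⟩

lemma subline_facts {k F : Type} [Field k] [Field F] [Algebra k F] (g : GL (Fin 3) F)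
    (u w : Fin 3 → F)
    (h1 : ∀ x ∈ SublinePlane k F g, OnCov F x w)
    (h2 : ∀ x ∈ SublinePlane k F g, ¬ OnCov F x u) :
    covL w (colv g 0) = 0 ∧ covL w (colv g 1) = 0 ∧
    Ind2 k F (covL u (colv g 0)) (covL u (colv g 1)) := by
  refine ⟨?_, ?_, ?_⟩
  · simpa [kc] using (subline_vals g u w h1 h2 1 0 (by simp)).1
  · simpa [kc] using (subline_vals g u w h1 h2 0 1 (by simp)).1
  · intro x y e
    by_contra hcon
    have hxy : x ≠ 0 ∨ y ≠ 0 := by tauto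
    apply (subline_vals g u w h1 h2 x y hxy).2
    simp only [kc, map_add, map_smul, smul_eq_mul]
    exact e

/-- Let ℓ, m be distinct lines of PG(2,q^3), b an order-q-subline of m
disjoint from ℓ. Then each order-q-subline c of ℓ disjoint from m is the projection of
b from exactly one point X not on ℓ or m. -/
theorem stmt18 (p n q : ℕ) (hp : p.Prime) (hn : 0 < n) (hq : q = p ^ n)
    (k F : Type) [Field k] [Field F] [Algebra k F] [Fintype k] [Fintype F]
    (hk : Fintype.card k = q) (hF : Fintype.card F = q ^ 3)
    (u w : Fin 3 → F) (hu : u ≠ 0) (hw : w ≠ 0) (huw : ¬ ∃ a : F, w = a • u)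
    (b c : Set (Projectivization F (Fin 3 → F)))
    (hb : ∃ g : GL (Fin 3) F, b = SublinePlane k F g)
    (hbm : ∀ x ∈ b, OnCov F x w) (hbl : ∀ x ∈ b, ¬ OnCov F x u)
    (hc : ∃ g : GL (Fin 3) F, c = SublinePlane k F g)
    (hcl : ∀ x ∈ c, OnCov F x u) (hcm : ∀ x ∈ c, ¬ OnCov F x w) :
    ∃! X : Projectivization F (Fin 3 → F),
      ¬ OnCov F X u ∧ ¬ OnCov F X w ∧ ProjFrom F X b u = c := by
  have h3 : Module.finrank k F = 3 := by
    have e := Module.card_eq_pow_finrank (K := k) (V := F)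
    rw [hk, hF] at e
    have h2 : 2 ≤ q := by rw [← hk]; exact Fintype.one_lt_card
    exact (Nat.pow_right_injective h2 e).symm
  obtain ⟨g, rfl⟩ := hb
  obtain ⟨g', rfl⟩ := hc
  have vb := subline_vals g u w hbm hbl
  obtain ⟨hh0, hh1, hβ⟩ := subline_facts g u w hbm hbl
  obtain ⟨hf0, hf1, hγ⟩ := subline_facts g' w u hcl hcm
  have hbi := colv_ind g
  have hci := colv_ind g'
  have hfb0 : covL u (colv g 0) ≠ 0 := by
    intro h
    exact one_ne_zero (hβ 1 0 (by simp [h])).1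
  -- what the projection condition says on vectors
  have toT : ∀ X : Projectivization F (Fin 3 → F), ¬ OnCov F X u → ¬ OnCov F X w →
      ProjFrom F X (SublinePlane k F g) u = SublinePlane k F g' →
      ∀ x y : k, (x ≠ 0 ∨ y ≠ 0) → ∃ a : F, a ≠ 0 ∧ ∃ z v : k,
      TT (covL u) X.rep (kc (F := F) k (colv g 0) (colv g 1) x y)
        = a • kc (F := F) k (colv g' 0) (colv g' 1) z v := by
    intro X hXu hXw hX x y hxy
    obtain ⟨hv1, hv2⟩ := vb x y hxy
    have hQ := kc_ne (k := k) hbi hxy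
    have hT := TT_ne (covL u) (covL w) (X := X.rep) hXw hv2 hv1
    obtain ⟨a, ha, ea⟩ := mk_rep _ hQ
    obtain ⟨c, hc, ec⟩ := mk_rep _ hT
    have hm : Projectivization.mk F _ hT ∈ SublinePlane k F g' := by
      rw [← hX]
      refine ⟨?_, Projectivization.mk F _ hQ, (mem_subline g _).2 ⟨x, y, hxy, a, ha, ea⟩, ?_⟩
      · change covL u _ = 0
        rw [ec, map_smul, TT_self, smul_zero]
      · rw [ec, ea]
        apply dep_det (r := -c * covL u (kc (F := F) k (colv g 0) (colv g 1) x y))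
          (s := c * covL u X.rep * a⁻¹)
        rw [smul_smul, mul_assoc, inv_mul_cancel₀ ha]
        simp only [TT]; module
    obtain ⟨z, v, -, d, hd, ed⟩ := (mem_subline g' _).1 hm
    refine ⟨c⁻¹ * d, mul_ne_zero (inv_ne_zero hc) hd, z, v, ?_⟩
    rw [ec] at ed
    rw [← smul_smul, ← ed, smul_smul, inv_mul_cancel₀ hc, one_smul]
  obtain ⟨X, hfX, hhX, γ, hγ0, T1, T2⟩ := core_exists h3 (covL u) (covL w)
    (ker_lem u w (colv g 0) hw hfb0 hh0) hbi hh0 hh1 hci hf0 hf1 hβ hγ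
  have hX0 : X ≠ 0 := by
    rintro rfl
    simp at hfX
  obtain ⟨a, ha, ea⟩ := mk_rep X hX0
  have hfX' : covL u (Projectivization.mk F X hX0).rep ≠ 0 := by
    rw [ea, map_smul]; exact mul_ne_zero ha hfX
  have hhX' : covL w (Projectivization.mk F X hX0).rep ≠ 0 := by
    rw [ea, map_smul]; exact mul_ne_zero ha hhX
  have hXP : ProjFrom F (Projectivization.mk F X hX0) (SublinePlane k F g) u
      = SublinePlane k F g' := by
    ext Y
    constructor
    · rintro ⟨hY, Q, hQ, hdet⟩
      have hY' : covL u Y.rep = 0 := hY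
      obtain ⟨x, y, hxy, c, hc, eQ⟩ := (mem_subline g _).1 hQ
      obtain ⟨d, hd⟩ := det_proj (covL u) (covL w) hfX' hhX' (hbl Q hQ) (hbm Q hQ) hY' hdet
      obtain ⟨z, v, e⟩ := T1 x y
      rw [eQ, TT_smul_right, ea, TT_smul_left, e, smul_smul, smul_smul, smul_smul] at hd
      have hne := Y.rep_nonzero
      refine (mem_subline g' _).2 ⟨z, v, ?_, _, ?_, hd⟩
      · by_contra hcon
        push Not at hcon
        apply hne
        rw [hd, hcon.1, hcon.2]
        simp [kc]
      · intro h0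
        apply hne
        rw [hd, h0, zero_smul]
    · intro hY
      refine ⟨hcl Y hY, ?_⟩
      obtain ⟨z, v, hzv, c, hc, eY⟩ := (mem_subline g' _).1 hY
      obtain ⟨x, y, e⟩ := T2 z v
      have hxy : x ≠ 0 ∨ y ≠ 0 := by
        by_contra hcon
        push Not at hcon
        rw [hcon.1, hcon.2] at e
        have e0 : γ • kc (F := F) k (colv g' 0) (colv g' 1) z v = 0 := by
          rw [← e]; simp [kc, TT]
        exact kc_ne (k := k) hci hzv ((smul_eq_zero.1 e0).resolve_left hγ0)
      have hQ := kc_ne (k := k) hbi hxy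
      obtain ⟨d, hd, ed⟩ := mk_rep _ hQ
      refine ⟨Projectivization.mk F _ hQ, (mem_subline g _).2 ⟨x, y, hxy, d, hd, ed⟩, ?_⟩
      have e' : Y.rep = (c * γ⁻¹) • TT (covL u) X (kc (F := F) k (colv g 0) (colv g 1) x y) := by
        rw [e, smul_smul, mul_assoc, inv_mul_cancel₀ hγ0, mul_one, eY]
      rw [ed, ea, e']
      apply dep_det (r := -(c * γ⁻¹) * covL u (kc (F := F) k (colv g 0) (colv g 1) x y) * a⁻¹)
        (s := c * γ⁻¹ * covL u X * d⁻¹)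
      rw [smul_smul, smul_smul, mul_assoc _ a⁻¹, mul_assoc _ d⁻¹, inv_mul_cancel₀ ha,
        inv_mul_cancel₀ hd]
      simp only [TT]; module
  refine ⟨Projectivization.mk F X hX0, ⟨hfX', hhX', hXP⟩, ?_⟩
  rintro Y ⟨hYu, hYw, hYP⟩
  obtain ⟨ρ, hρ⟩ := core_unique h3 (covL u) (covL w) hbi hh0 hh1 hβ hγ hfX' hhX'
    (toT _ hfX' hhX' hXP) hYu hYw (toT Y hYu hYw hYP)
  rw [← Projectivization.mk_rep Y, ← Projectivization.mk_rep (Projectivization.mk F X hX0)]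
  exact (Projectivization.mk_eq_mk_iff' F _ _ _ _).2 ⟨ρ, hρ.symm⟩
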